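/- Canonical form for even-dimensional real subspaces of ℂⁿ: let k ≥ 1 with 2k ≤ n, and let P be a 2k-dimensional real-linear subspace of ℂⁿ. Then there exist vectors e₁, …, e_{2k} in ℂⁿ such that the family (e₁, i•e₁, e₂, i•e₂, …, e_{2k}, i•e_{2k}) is orthonormal for the real inner product, and there exist angles θ₁, …, θ_k with 0 ≤ θ₁ ≤ … ≤ θ_{k−1} ≤ π/2 and θ_{k−1} ≤ θ_k ≤ π − θ_{k−1}, such that P is the real span of the 2k vectors e_{2j−1} and cos θ_j · (i•e_{2j−1}) + sin θ_j · e_{2j} for j = 1, …, k. -/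

import Mathlib

open Complex Finset Real

/-- The real inner product on `ℂⁿ`: `⟪u,v⟫ = Re Σⱼ uⱼ · conj(vⱼ)`. -/
noncomputable def rinner {n : ℕ} (u v : EuclideanSpace ℂ (Fin n)) : ℝ :=
  (∑ j, u j * starRingEnd ℂ (v j)).re

/-!
Let `ω(x, y) = Im ⟪x, y⟫`, an alternating form on `P`. Choose an orthonormal pair `(u, v)` in `P`
that maximizes `ω`. Since `v` maximizes `ω(u, ·)` on the unit sphere of `uᗮ`, the vector `u` is
`ω`-orthogonal to every vector of `P` that is orthogonal to `u` and `v`, and so is `v` by symmetry.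
Splitting off such pairs one after the other decomposes `P` into planes which are pairwise
orthogonal for the Hermitian product, with decreasing values `ω(u_j, v_j) = cos θ_j` in `[0, 1]`.

In each plane `⟪u_j, v_j⟫ = i cos θ_j`, so `v_j - cos θ_j • (i • u_j)` is Hermitian-orthogonal to
`u_j` and has length `sin θ_j`. Together with the `u_j` these remainders form an orthogonal family,
and normalizing it, with free choices where a remainder vanishes, gives the vectors `e_j`. These
choices are where `2k ≤ n` enters.
-/

section Orthonormal

open Module Metric
open scoped InnerProductSpace

variable {𝕜 E ι : Type*} [RCLike 𝕜] [NormedAddCommGroup E] [InnerProductSpace 𝕜 E]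

theorem orthonormal_fin_two {x y : E} (hx : ‖x‖ = 1) (hy : ‖y‖ = 1) (hxy : ⟪x, y⟫_𝕜 = 0) :
    Orthonormal 𝕜 ![x, y] := by
  simp_all

theorem orthonormal_cons_prod {k : ℕ} {p : ι → E} {w : Fin k → ι → E} (hp : Orthonormal 𝕜 p)
    (hw : Orthonormal 𝕜 fun q : Fin k × ι => w q.1 q.2) (hpw : ∀ a j b, ⟪p a, w j b⟫_𝕜 = 0) :
    Orthonormal 𝕜 fun q : Fin (k + 1) × ι => Fin.cons (α := fun _ => ι → E) p w q.1 q.2 := by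
  classical
  rw [orthonormal_iff_ite] at hp hw ⊢
  rintro ⟨i, a⟩ ⟨j, b⟩
  cases i using Fin.cases <;> cases j using Fin.cases
  · simpa using hp a b
  · simpa [(Fin.succ_ne_zero _).symm] using hpw a _ b
  · simpa using inner_eq_zero_symm.1 (hpw b _ a)
  · simpa using hw (_, a) (_, b)

theorem norm_sub_inner_smul_sq {u : E} (hu : ‖u‖ = 1) (v : E) :
    ‖v - ⟪u, v⟫_𝕜 • u‖ ^ 2 = ‖v‖ ^ 2 - ‖⟪u, v⟫_𝕜‖ ^ 2 := by
  have hre : RCLike.re (⟪u, v⟫_𝕜 * ⟪v, u⟫_𝕜) = ‖⟪u, v⟫_𝕜‖ ^ 2 := by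
    rw [← inner_conj_symm v u, RCLike.mul_conj]
    norm_cast
  rw [@norm_sub_sq 𝕜, inner_smul_right, hre, norm_smul, hu]
  ring

variable [FiniteDimensional 𝕜 E]

theorem isCompact_setOf_orthonormal [Finite ι] :
    IsCompact {v : ι → E | Orthonormal 𝕜 v} := by
  classical
  cases nonempty_fintype ι
  have := FiniteDimensional.proper 𝕜 E
  refine isCompact_of_isClosed_isBounded ?_ (isBounded_closedBall.subset fun v hv =>
    mem_closedBall_zero_iff.2 <| (pi_norm_le_iff_of_nonneg zero_le_one).2 fun i => (hv.1 i).le)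
  simp only [orthonormal_iff_ite, Set.ofPred_forall]
  exact isClosed_iInter fun i => isClosed_iInter fun j =>
    isClosed_eq (by fun_prop) continuous_const

variable [Fintype ι]

theorem exists_orthonormal_extension_of_card_le (hcard : Fintype.card ι ≤ finrank 𝕜 E)
    {v : ι → E} {s : Set ι} (hv : Orthonormal 𝕜 (s.domRestrict v)) :
    ∃ e : ι → E, Orthonormal 𝕜 e ∧ ∀ i ∈ s, e i = v i := by
  let κ := ι ⊕ Fin (finrank 𝕜 E - Fintype.card ι)
  let f : κ → E := Sum.elim v 0
  have hf : Orthonormal 𝕜 ((Sum.inl '' s : Set κ).domRestrict f) := by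
    constructor
    · rintro ⟨_, i, hi, rfl⟩
      exact hv.1 ⟨i, hi⟩
    · rintro ⟨_, i, hi, rfl⟩ ⟨_, j, hj, rfl⟩ hij
      exact hv.2 (i := ⟨i, hi⟩) (j := ⟨j, hj⟩) fun h => hij (by simp_all)
  obtain ⟨b, hb⟩ := hf.exists_orthonormalBasis_extension_of_card_eq (by simp [κ, hcard])
  exact ⟨b ∘ Sum.inl, b.orthonormal.comp _ Sum.inl_injective,
    fun i hi => hb _ (Set.mem_image_of_mem _ hi)⟩

theorem exists_orthonormal_eq_norm_smul (hcard : Fintype.card ι ≤ finrank 𝕜 E) {x : ι → E}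
    (hx : Pairwise fun i j => ⟪x i, x j⟫_𝕜 = 0) :
    ∃ e : ι → E, Orthonormal 𝕜 e ∧ ∀ i, x i = (‖x i‖ : 𝕜) • e i := by
  have hunit : Orthonormal 𝕜 ({i | x i ≠ 0}.domRestrict fun i => (‖x i‖⁻¹ : 𝕜) • x i) :=
    ⟨fun i => norm_smul_inv_norm i.2, fun i j hij => by
      simp [inner_smul_left, inner_smul_right, hx (Subtype.coe_injective.ne hij)]⟩
  obtain ⟨e, he, hex⟩ := exists_orthonormal_extension_of_card_le hcard hunit
  refine ⟨e, he, fun i => ?_⟩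
  obtain hi | hi := eq_or_ne (x i) 0
  · simp [hi]
  · rw [hex i hi, smul_inv_smul₀]
    simpa using hi

end Orthonormal

section AlternatingForm

open Module Metric
open scoped InnerProductSpace

variable {V : Type*} [NormedAddCommGroup V] [InnerProductSpace ℝ V]

theorem apply_eq_zero_of_isMaxOn_sphere {f : V →ₗ[ℝ] ℝ} {v w : V} (hv : ‖v‖ = 1)
    (hmax : IsMaxOn f (sphere 0 1) v) (hvw : ⟪v, w⟫_ℝ = 0) : f w = 0 := by
  have hbound (x : V) : f x ≤ f v * ‖x‖ := by
    obtain rfl | hx := eq_or_ne x 0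
    · simp
    · have h : f (‖x‖⁻¹ • x) ≤ f v := hmax (by simp [norm_smul, hx])
      rwa [map_smul, smul_eq_mul, inv_mul_le_iff₀ (norm_pos_iff.2 hx), mul_comm] at h
  -- Up to scaling, `x` is the projection of the gradient of `f` to the plane of `v` and `w`.
  set x := (‖w‖ ^ 2 * f v) • v + f w • w with hx
  have hfx : f x = ‖w‖ ^ 2 * f v ^ 2 + f w ^ 2 := by
    simp only [hx, map_add, map_smul, smul_eq_mul]
    ring
  have hnorm : ‖x‖ ^ 2 = ‖w‖ ^ 2 * f x := by
    rw [hfx, hx, norm_add_sq_real, norm_smul, norm_smul, inner_smul_left, inner_smul_right, hvw, hv,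
      mul_pow, mul_pow, norm_eq_abs, norm_eq_abs, sq_abs, sq_abs]
    ring
  have hsq : f x * f x ≤ f v ^ 2 * ‖w‖ ^ 2 * f x := by
    have hfx0 : 0 ≤ f x := by rw [hfx]; positivity
    calc f x * f x ≤ (f v * ‖x‖) * (f v * ‖x‖) := mul_self_le_mul_self hfx0 (hbound x)
      _ = f v ^ 2 * ‖w‖ ^ 2 * f x := by linear_combination f v ^ 2 * hnorm
  by_contra hw
  have hpos : 0 < f x := by rw [hfx]; positivity
  have := le_of_mul_le_mul_right hsq hpos
  have : 0 < f w ^ 2 := by positivity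
  linarith

variable {ω : V →ₗ[ℝ] V →ₗ[ℝ] ℝ} {p : Fin 2 → V}

theorem apply_zero_eq_zero_of_isMaxOn_orthonormal (hp : Orthonormal ℝ p)
    (hmax : IsMaxOn (fun q : Fin 2 → V => ω (q 0) (q 1)) {q | Orthonormal ℝ q} p) {x : V}
    (hx : ∀ a, ⟪p a, x⟫_ℝ = 0) : ω (p 0) x = 0 := by
  let K := (ℝ ∙ p 0)ᗮ
  have hK {y : V} : y ∈ K ↔ ⟪p 0, y⟫_ℝ = 0 := Submodule.mem_orthogonal_singleton_iff_inner_right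
  have h01 : ⟪p 0, p 1⟫_ℝ = 0 := hp.2 (by decide)
  refine apply_eq_zero_of_isMaxOn_sphere (f := ω (p 0) ∘ₗ K.subtype) (v := ⟨p 1, hK.2 h01⟩)
    (w := ⟨x, hK.2 (hx 0)⟩) (hp.1 1) (fun y hy => ?_) (hx 1)
  exact hmax (a := ![p 0, y]) <|
    orthonormal_fin_two (hp.1 0) (by simpa using hy) (hK.1 y.2)

theorem apply_eq_zero_of_isMaxOn_orthonormal (hω : ω.IsAlt) (hp : Orthonormal ℝ p)
    (hmax : IsMaxOn (fun q : Fin 2 → V => ω (q 0) (q 1)) {q | Orthonormal ℝ q} p) {x : V}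
    (hx : ∀ a, ⟪p a, x⟫_ℝ = 0) (a : Fin 2) : ω (p a) x = 0 := by
  revert a
  rw [Fin.forall_fin_two]
  refine ⟨apply_zero_eq_zero_of_isMaxOn_orthonormal hp hmax hx, ?_⟩
  -- The quarter turn `(p 1, -p 0)` of `p` is a maximizer too.
  have hrot : ω (p 1) (-p 0) = ω (p 0) (p 1) := by rw [map_neg, hω.neg]
  have h10 : ⟪p 1, p 0⟫_ℝ = 0 := hp.2 (by decide)
  refine apply_zero_eq_zero_of_isMaxOn_orthonormal (p := ![p 1, -p 0])
    (orthonormal_fin_two (hp.1 1) (by simpa using hp.1 0) (by simpa using h10))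
    (fun q hq => ?_) ?_
  · simpa [hrot] using hmax hq
  · simp [Fin.forall_fin_two, hx]

variable [FiniteDimensional ℝ V]

theorem exists_isMaxOn_orthonormal (ω : V →ₗ[ℝ] V →ₗ[ℝ] ℝ) (hV : 2 ≤ finrank ℝ V) :
    ∃ p : Fin 2 → V, Orthonormal ℝ p ∧
      IsMaxOn (fun q : Fin 2 → V => ω (q 0) (q 1)) {q | Orthonormal ℝ q} p := by
  have hne : {q : Fin 2 → V | Orthonormal ℝ q}.Nonempty :=
    ⟨_, (stdOrthonormalBasis ℝ V).orthonormal.comp _ (Fin.castLE_injective hV)⟩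
  have hcont : Continuous fun q : Fin 2 → V => ω.toContinuousBilinearMap (q 0) (q 1) := by
    fun_prop
  exact isCompact_setOf_orthonormal.exists_isMaxOn hne hcont.continuousOn

theorem exists_orthonormal_blockDiagonal_of_isAlt {k : ℕ} (hω : ω.IsAlt)
    (hV : finrank ℝ V = 2 * k) :
    ∃ w : Fin k → Fin 2 → V, (Orthonormal ℝ fun q : Fin k × Fin 2 => w q.1 q.2) ∧
      (Pairwise fun i j => ∀ a b, ω (w i a) (w j b) = 0) ∧
      (∀ j, 0 ≤ ω (w j 0) (w j 1)) ∧ Antitone fun j => ω (w j 0) (w j 1) := by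
  induction k generalizing V with
  | zero => exact ⟨Fin.elim0, by simp [Orthonormal, Pairwise, Antitone]⟩
  | succ k ih =>
    obtain ⟨p, hp, hmax⟩ := exists_isMaxOn_orthonormal ω (by lia)
    let W := (Submodule.span ℝ (Set.range p))ᗮ
    have hW : finrank ℝ W = 2 * k := by
      apply Submodule.finrank_add_finrank_orthogonal'
      rw [finrank_span_eq_card hp.linearIndependent, hV, Fintype.card_fin]
      ring
    have horth (x : W) (a : Fin 2) : ⟪p a, x⟫_ℝ = 0 :=
      x.2 _ (Submodule.subset_span (Set.mem_range_self a))
    have hωW (x : W) (a : Fin 2) : ω (p a) x = 0 :=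
      apply_eq_zero_of_isMaxOn_orthonormal hω hp hmax (horth x) a
    obtain ⟨w, hw, hblock, hnonneg, hanti⟩ := ih (ω := ω.domRestrict₁₂ W W) (fun x => hω x) hW
    have hw' : Orthonormal ℝ fun q : Fin k × Fin 2 => (w q.1 q.2 : V) :=
      hw.comp_linearIsometry W.subtypeₗᵢ
    refine ⟨Fin.cons p fun j a => w j a,
      orthonormal_cons_prod hp hw' fun a j b => horth (w j b) a, ?_, ?_, ?_⟩
    · intro i j hij a b
      cases i using Fin.cases <;> cases j using Fin.cases
      · exact absurd rfl hij
      · exact hωW _ a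
      · exact hω.eq_iff.1 (hωW _ b)
      · exact hblock (ne_of_apply_ne Fin.succ hij) a b
    · refine Fin.cases ?_ hnonneg
      have hswap : ω (p 1) (p 0) ≤ ω (p 0) (p 1) :=
        hmax (hp.comp ![1, 0] (by decide))
      rw [← hω.neg] at hswap
      simpa using (by linarith : 0 ≤ ω (p 0) (p 1))
    · intro i j hij
      cases j using Fin.cases with
      | zero => rw [Fin.le_zero_iff.1 hij]
      | succ j =>
        cases i using Fin.cases with
        | zero => exact hmax (hw'.comp (fun a => (j, a)) (Prod.mk_right_injective j))
        | succ i => exact hanti (Fin.succ_le_succ_iff.1 hij)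

end AlternatingForm

section KahlerAngle

open Module
open scoped InnerProductSpace

variable {E ι : Type*} [NormedAddCommGroup E] [InnerProductSpace ℂ E]

/-- The Kähler form of a complex inner product space, i.e. the imaginary part of its Hermitian
product (which is conjugate-linear in the first argument). -/
noncomputable def kahlerForm (E : Type*) [NormedAddCommGroup E] [InnerProductSpace ℂ E] :
    E →ₗ[ℝ] E →ₗ[ℝ] ℝ :=
  LinearMap.mk₂ ℝ (fun x y => (⟪x, y⟫_ℂ).im)
    (fun x y z => by rw [inner_add_left, Complex.add_im])
    (fun c x y => by
      rw [← Complex.coe_smul, inner_smul_left, conj_ofReal, im_ofReal_mul, smul_eq_mul])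
    (fun x y z => by rw [inner_add_right, Complex.add_im])
    (fun c x y => by rw [← Complex.coe_smul, inner_smul_right, im_ofReal_mul, smul_eq_mul])

theorem kahlerForm_apply (x y : E) : kahlerForm E x y = (⟪x, y⟫_ℂ).im := rfl

theorem isAlt_kahlerForm : (kahlerForm E).IsAlt := fun x => inner_self_im (𝕜 := ℂ) x

/-- A family of real planes that are pairwise orthogonal for the Hermitian product: `w j` is an
orthonormal basis of the `j`-th plane and `θ j` is a Kähler angle of that plane. Asking
`⟪w j 0, w j 1⟫_ℂ` to be purely imaginary encodes orthogonality for the real inner product. -/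
structure IsKahlerPlaneFamily (w : ι → Fin 2 → E) (θ : ι → ℝ) : Prop where
  norm_eq_one (j : ι) (a : Fin 2) : ‖w j a‖ = 1
  inner_zero_one (j : ι) : ⟪w j 0, w j 1⟫_ℂ = Real.cos (θ j) * I
  inner_eq_zero {i j : ι} (hij : i ≠ j) (a b : Fin 2) : ⟪w i a, w j b⟫_ℂ = 0

theorem exists_isKahlerPlaneFamily {k : ℕ} (P : Submodule ℝ E) [FiniteDimensional ℝ P]
    (hP : finrank ℝ P = 2 * k) :
    ∃ (w : Fin k → Fin 2 → E) (θ : Fin k → ℝ), IsKahlerPlaneFamily w θ ∧ Monotone θ ∧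
      (∀ j, θ j ∈ Set.Icc 0 (π / 2)) ∧
      P = Submodule.span ℝ (Set.range fun q : Fin k × Fin 2 => w q.1 q.2) := by
  let := InnerProductSpace.complexToReal (G := E)
  obtain ⟨w, hw, hblock, hnonneg, hanti⟩ := exists_orthonormal_blockDiagonal_of_isAlt
    (ω := (kahlerForm E).domRestrict₁₂ P P) (fun x => isAlt_kahlerForm (x : E)) hP
  simp only [LinearMap.domRestrict₁₂_apply, kahlerForm_apply] at hblock hnonneg hanti
  let c (j : Fin k) : ℝ := (⟪(w j 0 : E), (w j 1 : E)⟫_ℂ).im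
  have hnorm (j : Fin k) (a : Fin 2) : ‖(w j a : E)‖ = 1 := hw.1 (j, a)
  have hre {p q : Fin k × Fin 2} (hpq : p ≠ q) :
      (⟪(w p.1 p.2 : E), (w q.1 q.2 : E)⟫_ℂ).re = 0 := hw.2 hpq
  have hc1 (j : Fin k) : c j ≤ 1 := by
    have h := norm_inner_le_norm (𝕜 := ℂ) (w j 0 : E) (w j 1)
    rw [hnorm, hnorm, one_mul] at h
    exact (im_le_norm _).trans h
  refine ⟨fun j a => w j a, fun j => arccos (c j), ⟨hnorm, fun j => ?_, fun {i j} hij a b => ?_⟩,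
    antitone_arccos.comp hanti,
    fun j => ⟨arccos_nonneg _, arccos_le_pi_div_two.2 (hnonneg j)⟩, ?_⟩
  · rw [Real.cos_arccos (neg_one_lt_zero.le.trans (hnonneg j)) (hc1 j)]
    apply Complex.ext
    · simpa using hre (p := (j, 0)) (q := (j, 1)) (by simp)
    · simp
  · exact Complex.ext (hre (p := (i, a)) (q := (j, b)) (by simp [hij])) (hblock hij a b)
  · have htop := hw.linearIndependent.span_eq_top_of_card_eq_finrank' (by simp [hP, mul_comm])
    have := congrArg (Submodule.map P.subtype) htop
    rw [Submodule.map_span, ← Set.range_comp, Submodule.map_top, Submodule.range_subtype] at this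
    exact this.symm

theorem IsKahlerPlaneFamily.norm_sub_inner_smul {w : ι → Fin 2 → E} {θ : ι → ℝ}
    (h : IsKahlerPlaneFamily w θ) (hθ : ∀ j, θ j ∈ Set.Icc 0 π) (j : ι) :
    ‖w j 1 - ⟪w j 0, w j 1⟫_ℂ • w j 0‖ = Real.sin (θ j) := by
  have hsin : 0 ≤ Real.sin (θ j) := sin_nonneg_of_mem_Icc (hθ j)
  rw [← sq_eq_sq₀ (norm_nonneg _) hsin, norm_sub_inner_smul_sq (h.norm_eq_one j 0),
    h.norm_eq_one, h.inner_zero_one, norm_mul, norm_I, mul_one, norm_real, norm_eq_abs, sq_abs,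
    Real.sin_sq, one_pow]

theorem IsKahlerPlaneFamily.exists_orthonormal [Fintype ι] [FiniteDimensional ℂ E]
    {w : ι → Fin 2 → E} {θ : ι → ℝ} (h : IsKahlerPlaneFamily w θ)
    (hθ : ∀ j, θ j ∈ Set.Icc 0 π) (hcard : 2 * Fintype.card ι ≤ finrank ℂ E) :
    ∃ e : ι × Fin 2 → E, Orthonormal ℂ e ∧ ∀ j, w j 0 = e (j, 0) ∧
      w j 1 = Real.cos (θ j) • (I • e (j, 0)) + Real.sin (θ j) • e (j, 1) := by
  let r (j : ι) : E := w j 1 - ⟪w j 0, w j 1⟫_ℂ • w j 0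
  have hur (j : ι) : ⟪w j 0, r j⟫_ℂ = 0 := by
    simp only [r, inner_sub_right, inner_smul_right, inner_self_eq_norm_sq_to_K, h.norm_eq_one]
    simp
  have hwr {i j : ι} (hij : i ≠ j) (a : Fin 2) : ⟪w i a, r j⟫_ℂ = 0 := by
    simp [r, h.inner_eq_zero hij]
  have hrr {i j : ι} (hij : i ≠ j) : ⟪r i, r j⟫_ℂ = 0 := by
    rw [inner_sub_left, inner_smul_left, hwr hij, hwr hij, mul_zero, sub_zero]
  have horth : Pairwise fun p q : ι × Fin 2 =>
      ⟪![w p.1 0, r p.1] p.2, ![w q.1 0, r q.1] q.2⟫_ℂ = 0 := by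
    rintro ⟨i, a⟩ ⟨j, b⟩ hne
    obtain rfl | hij := eq_or_ne i j
    · fin_cases a <;> fin_cases b
      · exact absurd rfl hne
      · exact hur i
      · exact inner_eq_zero_symm.1 (hur i)
      · exact absurd rfl hne
    · fin_cases a <;> fin_cases b
      · exact h.inner_eq_zero hij 0 0
      · exact hwr hij 0
      · exact inner_eq_zero_symm.1 (hwr hij.symm 0)
      · exact hrr hij
  obtain ⟨e, he, hre⟩ := exists_orthonormal_eq_norm_smul (by simpa [mul_comm] using hcard) horth
  have he0 (j : ι) : w j 0 = e (j, 0) := by simpa [h.norm_eq_one] using hre (j, 0)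
  have he1 (j : ι) : r j = Real.sin (θ j) • e (j, 1) := by
    rw [← Complex.coe_smul, ← h.norm_sub_inner_smul hθ]
    exact hre (j, 1)
  refine ⟨e, he, fun j => ⟨he0 j, ?_⟩⟩
  rw [← he0, ← he1, ← Complex.coe_smul, smul_smul, ← h.inner_zero_one, add_sub_cancel]

theorem canonical_form_even_dim_subspace_general [FiniteDimensional ℂ E] {k : ℕ}
    (hk : 2 * k ≤ finrank ℂ E) (P : Submodule ℝ E) (hP : finrank ℝ P = 2 * k) :
    ∃ (e : Fin (2 * k) → E) (θ : Fin k → ℝ),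
      Orthonormal ℂ e ∧ Monotone θ ∧ (∀ j, θ j ∈ Set.Icc 0 (π / 2)) ∧
      P = Submodule.span ℝ
        (Set.range (fun j : Fin k => e ⟨2 * j, by lia⟩) ∪
         Set.range (fun j : Fin k => Real.cos (θ j) • (I • e ⟨2 * j, by lia⟩) +
           Real.sin (θ j) • e ⟨2 * j + 1, by lia⟩)) := by
  obtain ⟨w, θ, hw, hmono, hθ, hspan⟩ := exists_isKahlerPlaneFamily P hP
  obtain ⟨e, he, hwe⟩ := hw.exists_orthonormal
    (fun j => ⟨(hθ j).1, (hθ j).2.trans (half_le_self pi_nonneg)⟩) (by simpa using hk)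
  let σ : Fin k × Fin 2 ≃ Fin (2 * k) := finProdFinEquiv.trans (finCongr (mul_comm k 2))
  have hσ0 (j : Fin k) : σ.symm ⟨2 * j, by lia⟩ = (j, 0) := by
    rw [Equiv.symm_apply_eq]
    ext
    simp [σ]
  have hσ1 (j : Fin k) : σ.symm ⟨2 * j + 1, by lia⟩ = (j, 1) := by
    rw [Equiv.symm_apply_eq]
    ext
    simp [σ, add_comm]
  refine ⟨e ∘ σ.symm, θ, he.comp _ σ.symm.injective, hmono, hθ, hspan.trans ?_⟩
  congr 1
  ext x
  simp [hσ0, hσ1, hwe, Fin.exists_fin_two, exists_or]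

end KahlerAngle

theorem rinner_eq_re_inner {n : ℕ} (u v : EuclideanSpace ℂ (Fin n)) :
    rinner u v = (inner ℂ v u).re := by
  simp only [rinner, PiLp.inner_apply, RCLike.inner_apply]

theorem rinner_ite_smul_I_of_orthonormal {n : ℕ} {ι : Type*} [DecidableEq ι]
    {e : ι → EuclideanSpace ℂ (Fin n)} (he : Orthonormal ℂ e) (p q : ι × Bool) :
    rinner (if p.2 then I • e p.1 else e p.1) (if q.2 then I • e q.1 else e q.1) =
      if p = q then 1 else 0 := by
  obtain ⟨i, a⟩ := p
  obtain ⟨j, b⟩ := q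
  have hsmul (c : Bool) (x : EuclideanSpace ℂ (Fin n)) :
      (if c then I • x else x) = (if c then I else 1) • x := by cases c <;> simp
  rw [hsmul, hsmul, rinner_eq_re_inner, inner_smul_left, inner_smul_right,
    orthonormal_iff_ite.1 he]
  obtain rfl | h := eq_or_ne i j
  · cases a <;> cases b <;> simp
  · simp [h, h.symm]

/-- **Canonical form for even-dimensional real subspaces of `ℂⁿ`.**
Every real `2k`-dimensional subspace `P` of `ℂⁿ` (with `2k ≤ n`) is spanned by
vectors `e_{2j-1}` and `cos θ_j • (i • e_{2j-1}) + sin θ_j • e_{2j}`, `j = 1, …, k`,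
where the family `(e_1, i•e_1, …, e_{2k}, i•e_{2k})` is orthonormal and the angles
satisfy `0 ≤ θ_1 ≤ ⋯ ≤ θ_{k-1} ≤ π/2` and `θ_{k-1} ≤ θ_k ≤ π - θ_{k-1}`. -/
theorem canonical_form_even_dim_subspace {n k : ℕ} (hk : 1 ≤ k) (hkn : 2 * k ≤ n)
    (P : Submodule ℝ (EuclideanSpace ℂ (Fin n)))
    (hP : Module.finrank ℝ P = 2 * k) :
    ∃ (e : Fin (2 * k) → EuclideanSpace ℂ (Fin n)) (θ : Fin k → ℝ),
      -- the family (e_j, i•e_j) is orthonormal for the real inner product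
      (∀ p q : Fin (2 * k) × Bool,
        rinner (if p.2 then Complex.I • e p.1 else e p.1)
               (if q.2 then Complex.I • e q.1 else e q.1) = if p = q then 1 else 0) ∧
      -- angle conditions
      (∀ j : Fin k, 0 ≤ θ j ∧ θ j ≤ π) ∧
      (∀ i j : Fin k, i ≤ j → (j : ℕ) + 2 ≤ k → θ i ≤ θ j) ∧
      (∀ j : Fin k, (j : ℕ) + 2 ≤ k →
        θ j ≤ π / 2 ∧ θ j ≤ θ ⟨k - 1, by omega⟩ ∧ θ ⟨k - 1, by omega⟩ ≤ π - θ j) ∧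
      -- P is spanned by the canonical vectors
      P = Submodule.span ℝ
        (Set.range (fun j : Fin k => e ⟨2 * (j : ℕ), by have := j.isLt; omega⟩) ∪
         Set.range (fun j : Fin k =>
           Real.cos (θ j) • (Complex.I • e ⟨2 * (j : ℕ), by have := j.isLt; omega⟩) +
           Real.sin (θ j) • e ⟨2 * (j : ℕ) + 1, by have := j.isLt; omega⟩)) := by
  obtain ⟨e, θ, he, hmono, hθ, hspan⟩ :=
    canonical_form_even_dim_subspace_general (by simpa using hkn) P hP
  refine ⟨e, θ, rinner_ite_smul_I_of_orthonormal he,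
    fun j => ⟨(hθ j).1, (hθ j).2.trans (half_le_self pi_nonneg)⟩, fun i j hij _ => hmono hij,
    fun j hj => ⟨(hθ j).2, hmono (Fin.le_def.2 (by simp; lia)), ?_⟩, hspan⟩
  linarith [(hθ j).2, (hθ ⟨k - 1, by lia⟩).2]
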